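/- arXiv:2504.00177 — 2 statements merged into one kernel-verified Lean document; each statement's English description precedes it below -/
import Mathlib

section
/- For every integer n, the Baumslag–Solitar group B(n, n+2) = ⟨a, t ∣ t a^n t⁻¹ = a^{n+2}⟩ has a subgroup Γ' of index 2 whose abelianization A has no ℤ/2 direct summand, i.e. every x ∈ A with 2x = 0 satisfies x = 2y for some y ∈ A. -/
/-- The relator `t a^m t⁻¹ a^{-n}` of the Baumslag–Solitar group, in the free group
on two generators, where `a` is `FreeGroup.of 0` and `t` is `FreeGroup.of 1`. -/
def BSRel (m n : ℤ) : FreeGroup (Fin 2) :=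
  FreeGroup.of 1 * FreeGroup.of 0 ^ m * (FreeGroup.of 1)⁻¹ * FreeGroup.of 0 ^ (-n)

/-- The Baumslag–Solitar group `B(m,n) = ⟨a, t ∣ t a^m t⁻¹ = a^n⟩`. -/
abbrev BS (m n : ℤ) : Type :=
  PresentedGroup ({BSRel m n} : Set (FreeGroup (Fin 2)))

/-- A subgroup containing `x ^ 2`, `y` and `x * y * x⁻¹` contains every element of `⟨x, y⟩`
killed by a homomorphism that does not kill `x`, provided it kills the subgroup itself. -/
theorem ker_le_of_generators_mem {G Q : Type*} [Group G] [Group Q] {x y : G}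
    (hgen : Subgroup.closure {x, y} = ⊤) (f : G →* Q) (hx : f x ≠ 1)
    {S : Subgroup G} (hSf : S ≤ f.ker) (hxx : x ^ 2 ∈ S) (hy : y ∈ S) (hxy : x * y * x⁻¹ ∈ S) :
    f.ker ≤ S := by
  have key : ∀ g : G, g ∈ S ∨ x * g ∈ S := by
    intro g
    have hg : g ∈ Subgroup.closure {x, y} := hgen ▸ Subgroup.mem_top g
    induction hg using Subgroup.closure_induction_left with
    | one => exact Or.inl S.one_mem
    | mul_left z hz g _ ih =>
      rcases hz with rfl | rfl
      · rcases ih with h | h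
        · right
          simpa [pow_two, mul_assoc] using S.mul_mem hxx h
        · exact Or.inl h
      · rcases ih with h | h
        · exact Or.inl (S.mul_mem hy h)
        · right
          simpa [mul_assoc] using S.mul_mem hxy h
    | inv_mul_cancel z hz g _ ih =>
      rcases hz with rfl | rfl
      · rcases ih with h | h
        · right
          simpa using h
        · left
          simpa [pow_two, mul_assoc] using S.mul_mem (S.inv_mem hxx) h
      · rcases ih with h | h
        · exact Or.inl (S.mul_mem (S.inv_mem hy) h)
        · right
          simpa [mul_assoc] using S.mul_mem (S.inv_mem hxy) h
  intro g hg
  rcases key g with h | h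
  · exact h
  · have hxg : f (x * g) = 1 := hSf h
    rw [map_mul, MonoidHom.mem_ker.1 hg, mul_one] at hxg
    exact absurd hxg hx

/-- The first coordinate of a regular wreath product, on the kernel of the projection. -/
def wreathKerHom {G D Q : Type*} [Group G] [Group D] [Group Q]
    (F : G →* RegularWreathProduct D Q) :
    (RegularWreathProduct.rightHom.comp F).ker →* D where
  toFun g := (F g).left 1
  map_one' := by simp
  map_mul' g h := by
    have hg : (F g).right = 1 := g.2
    simp [hg]

/-- A commutative group generated by two elements which are sent to the standard generators of
`(ℤ/4)²` by some homomorphism has no direct summand `ℤ/2`. -/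
theorem exists_sq_of_sq_eq_one {A : Type*} [CommGroup A] {g₁ g₂ : A}
    (hgen : Subgroup.closure {g₁, g₂} = ⊤) (f : A →* Multiplicative (ZMod 4 × ZMod 4))
    (h₁ : f g₁ = Multiplicative.ofAdd (1, 0)) (h₂ : f g₂ = Multiplicative.ofAdd (0, 1))
    (x : A) (hx : x ^ 2 = 1) : ∃ y : A, x = y ^ 2 := by
  have hmem : x ∈ Subgroup.closure {g₁, g₂} := hgen ▸ Subgroup.mem_top x
  obtain ⟨i, j, rfl⟩ := Subgroup.mem_closure_pair.1 hmem
  have even_of_two_mul (k : ℤ) (hk : (2 * k : ZMod 4) = 0) : ∃ l, k = 2 * l := by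
    have h4 : ((4 : ℕ) : ℤ) ∣ 2 * k := (ZMod.intCast_zmod_eq_zero_iff_dvd _ 4).1 (by simpa using hk)
    exact ⟨k / 2, by push_cast at h4; omega⟩
  have h := congrArg (fun z => Multiplicative.toAdd (f z)) hx
  simp [h₁, h₂] at h
  obtain ⟨k, rfl⟩ := even_of_two_mul i h.1
  obtain ⟨l, rfl⟩ := even_of_two_mul j h.2
  exact ⟨g₁ ^ k * g₂ ^ l, by
    rw [mul_pow, mul_comm 2 k, mul_comm 2 l, zpow_mul, zpow_mul]; norm_cast⟩

/-- A two-generator group with a suitable homomorphism to `(ℤ/4)² ≀ ℤ/2` has a 2-avoiding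
subgroup of index two. -/
theorem exists_two_avoiding_of_wreath {G : Type*} [Group G] {x y : G}
    (hgen : Subgroup.closure {x, y} = ⊤)
    (F : G →* RegularWreathProduct (Multiplicative (ZMod 4 × ZMod 4)) (Multiplicative (ZMod 2)))
    (hx : (F x).right = Multiplicative.ofAdd 1) (hy : (F y).right = 1)
    (hF : ∀ X Y Z : (RegularWreathProduct.rightHom.comp F).ker,
      (X : G) = x ^ 2 → (Y : G) = y → (Z : G) = x * y * x⁻¹ →
      ∃ g₁ g₂ : Abelianization (RegularWreathProduct.rightHom.comp F).ker,
        Abelianization.lift (wreathKerHom F) g₁ = Multiplicative.ofAdd (1, 0) ∧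
        Abelianization.lift (wreathKerHom F) g₂ = Multiplicative.ofAdd (0, 1) ∧
        Abelianization.of X ∈ Subgroup.closure {g₁, g₂} ∧
        Abelianization.of Y ∈ Subgroup.closure {g₁, g₂} ∧
        Abelianization.of Z ∈ Subgroup.closure {g₁, g₂}) :
    ∃ H : Subgroup G, H.index = 2 ∧
      ∀ z : Abelianization H, z ^ 2 = 1 → ∃ w : Abelianization H, z = w ^ 2 := by
  set f := RegularWreathProduct.rightHom.comp F
  have hfx : f x = Multiplicative.ofAdd 1 := hx
  have hfy : f y = 1 := hy
  have hX : x ^ 2 ∈ f.ker := by rw [MonoidHom.mem_ker, map_pow, hfx]; rfl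
  have hZ : x * y * x⁻¹ ∈ f.ker := by simp [MonoidHom.mem_ker, hfy]
  obtain ⟨g₁, g₂, h₁, h₂, hX', hY', hZ'⟩ := hF ⟨_, hX⟩ ⟨_, hfy⟩ ⟨_, hZ⟩ rfl rfl rfl
  refine ⟨f.ker, ?_, ?_⟩
  · have hsurj : Function.Surjective f := by
      intro q
      have hq : ∀ q : Multiplicative (ZMod 2), q = 1 ∨ q = Multiplicative.ofAdd 1 := by decide
      rcases hq q with rfl | rfl
      · exact ⟨1, map_one f⟩
      · exact ⟨x, hfx⟩
    rw [Subgroup.index_ker, MonoidHom.range_eq_top.2 hsurj]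
    simp
  · refine exists_sq_of_sq_eq_one (g₁ := g₁) (g₂ := g₂) ?_ (Abelianization.lift (wreathKerHom F))
      h₁ h₂
    let S := (Subgroup.closure {g₁, g₂}).comap Abelianization.of
    have hle := ker_le_of_generators_mem hgen f (by rw [hfx]; decide)
      (S := S.map f.ker.subtype) (Subgroup.map_subtype_le S)
      ⟨_, hX', rfl⟩ ⟨_, hY', rfl⟩ ⟨_, hZ', rfl⟩
    refine eq_top_iff.2 fun z _ => ?_
    obtain ⟨h, rfl⟩ := QuotientGroup.mk_surjective z
    obtain ⟨h', hh', heq⟩ := hle h.2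
    rw [← Subtype.ext heq]
    exact hh'

theorem BS_relation (m n : ℤ) :
    (PresentedGroup.of 1 * PresentedGroup.of 0 ^ m * (PresentedGroup.of 1)⁻¹ : BS m n) =
      PresentedGroup.of 0 ^ n := by
  have h : PresentedGroup.mk {BSRel m n} (BSRel m n) = 1 :=
    PresentedGroup.one_of_mem (Set.mem_singleton _)
  have hmk : PresentedGroup.mk {BSRel m n} (BSRel m n) =
      PresentedGroup.of 1 * PresentedGroup.of 0 ^ m * (PresentedGroup.of 1)⁻¹ *
        PresentedGroup.of 0 ^ (-n) := by
    conv_lhs => arg 2; rw [BSRel]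
    simp only [map_mul, map_inv, map_zpow]
    rfl
  rwa [hmk, zpow_neg, mul_inv_eq_one] at h

theorem BS_closure (m n : ℤ) :
    Subgroup.closure {(PresentedGroup.of 0 : BS m n), PresentedGroup.of 1} = ⊤ := by
  rw [← PresentedGroup.closure_range_of]
  congr 1
  ext z
  simp [Fin.exists_fin_two, eq_comm]

/-- The homomorphism out of a Baumslag–Solitar group given by images of the generators. -/
theorem exists_BS_lift {W : Type*} [Group W] {m n : ℤ} (α τ : W)
    (h : τ * α ^ m * τ⁻¹ = α ^ n) :
    ∃ F : BS m n →* W, F (PresentedGroup.of 0) = α ∧ F (PresentedGroup.of 1) = τ := by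
  have hrel : ∀ r ∈ ({BSRel m n} : Set (FreeGroup (Fin 2))), FreeGroup.lift ![α, τ] r = 1 := by
    rintro r rfl
    simp [BSRel, h]
  exact ⟨PresentedGroup.toGroup hrel, PresentedGroup.toGroup.of hrel, PresentedGroup.toGroup.of hrel⟩

theorem wreath_zpow_of_right_eq_one {D Q : Type*} [Group D] [Group Q] (d : Q → D) (m : ℤ) :
    (⟨d, 1⟩ : RegularWreathProduct D Q) ^ m = ⟨d ^ m, 1⟩ := by
  let ι : (Q → D) →* RegularWreathProduct D Q :=
    { toFun := fun d => ⟨d, 1⟩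
      map_one' := rfl
      map_mul' := fun a b => by ext <;> simp }
  exact (map_zpow ι d m).symm

theorem exists_two_avoiding_of_even (k : ℤ) :
    ∃ H : Subgroup (BS (2 * k) (2 * k + 2)), H.index = 2 ∧
      ∀ z : Abelianization H, z ^ 2 = 1 → ∃ w : Abelianization H, z = w ^ 2 := by
  let α : RegularWreathProduct (Multiplicative (ZMod 4 × ZMod 4)) (Multiplicative (ZMod 2)) :=
    ⟨1, Multiplicative.ofAdd 1⟩
  let τ : RegularWreathProduct (Multiplicative (ZMod 4 × ZMod 4)) (Multiplicative (ZMod 2)) :=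
    ⟨fun q => if q = 1 then Multiplicative.ofAdd (1, 0) else Multiplicative.ofAdd (0, 1), 1⟩
  have hα : α ^ (2 : ℤ) = 1 := by
    rw [zpow_two]
    exact RegularWreathProduct.ext (by simp [α]; rfl) (by simp only [α]; decide)
  obtain ⟨F, hFa, hFt⟩ := exists_BS_lift (m := 2 * k) (n := 2 * k + 2) α τ (by
    rw [zpow_add, zpow_mul, hα]; simp)
  refine exists_two_avoiding_of_wreath (BS_closure _ _) F (by rw [hFa]) (by rw [hFt]) ?_
  intro X Y Z hX hY hZ
  have hrel : Y * X ^ k * Y⁻¹ = X ^ (k + 1) := by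
    apply Subtype.ext
    have h := BS_relation (2 * k) (2 * k + 2)
    have hexp (z : BS (2 * k) (2 * k + 2)) : z ^ (2 * k + 2) = (z ^ 2) ^ (k + 1) := by
      rw [← zpow_natCast z 2, ← zpow_mul]
      congr 1
      push_cast
      ring
    rw [hexp, zpow_mul] at h
    simpa [hX, hY] using h
  have hX1 : Abelianization.of X = 1 := by
    have h := congrArg Abelianization.of hrel
    simpa [zpow_add_one] using h
  refine ⟨Abelianization.of Y, Abelianization.of Z, ?_, ?_, hX1 ▸ Subgroup.one_mem _,
    Subgroup.subset_closure (by simp), Subgroup.subset_closure (by simp)⟩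
  · rw [Abelianization.lift_apply_of]
    simp [wreathKerHom, hY, hFt, τ]
  · rw [Abelianization.lift_apply_of]
    simp [wreathKerHom, hZ, hFt, hFa, τ, α]

theorem exists_two_avoiding_of_odd (k : ℤ) :
    ∃ H : Subgroup (BS (2 * k + 1) (2 * k + 1 + 2)), H.index = 2 ∧
      ∀ z : Abelianization H, z ^ 2 = 1 → ∃ w : Abelianization H, z = w ^ 2 := by
  let d : Multiplicative (ZMod 2) → Multiplicative (ZMod 4 × ZMod 4) := fun q =>
    if q = 1 then Multiplicative.ofAdd (2 * k + 1, 0) else Multiplicative.ofAdd (2 * k + 3, 0)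
  let α : RegularWreathProduct (Multiplicative (ZMod 4 × ZMod 4)) (Multiplicative (ZMod 2)) :=
    ⟨d, 1⟩
  let τ : RegularWreathProduct (Multiplicative (ZMod 4 × ZMod 4)) (Multiplicative (ZMod 2)) :=
    ⟨fun q => if q = 1 then Multiplicative.ofAdd (0, 1) else 1, Multiplicative.ofAdd 1⟩
  have h4 : (4 : ZMod 4) = 0 := rfl
  obtain ⟨F, hFa, hFt⟩ := exists_BS_lift (m := 2 * k + 1) (n := 2 * k + 1 + 2) α τ (by
    rw [wreath_zpow_of_right_eq_one, wreath_zpow_of_right_eq_one]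
    have hq : ∀ q : Multiplicative (ZMod 2), q = 1 ∨ q = Multiplicative.ofAdd 1 := by decide
    refine RegularWreathProduct.ext (funext fun q => ?_) (by simp)
    apply Multiplicative.toAdd.injective
    rcases hq q with rfl | rfl
    · simp [τ, d]
      ring
    · simp [τ, d]
      linear_combination (-2 * (k : ZMod 4) - 2) * h4)
  refine exists_two_avoiding_of_wreath (Set.pair_comm _ _ ▸ BS_closure _ _) F (by rw [hFt])
    (by rw [hFa]) ?_
  intro X Y Z hX hY hZ
  have hrel : Z ^ (2 * k + 1) = Y ^ (2 * k + 1 + 2) := by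
    apply Subtype.ext
    have h := BS_relation (2 * k + 1) (2 * k + 1 + 2)
    simpa [hY, hZ, conj_zpow] using h
  have hrel' := congrArg Abelianization.of hrel
  rw [map_zpow, map_zpow] at hrel'
  have hfX : Abelianization.lift (wreathKerHom F) (Abelianization.of X) =
      Multiplicative.ofAdd (0, 1) := by
    rw [Abelianization.lift_apply_of]
    simp [wreathKerHom, hX, hFt, τ, pow_two]
  have hfY : Abelianization.lift (wreathKerHom F) (Abelianization.of Y) =
      Multiplicative.ofAdd (2 * (k : ZMod 4) + 1, 0) := by
    rw [Abelianization.lift_apply_of]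
    simp [wreathKerHom, hY, hFa, α, d]
  have hfZ : Abelianization.lift (wreathKerHom F) (Abelianization.of Z) =
      Multiplicative.ofAdd (2 * (k : ZMod 4) + 3, 0) := by
    rw [Abelianization.lift_apply_of]
    simp [wreathKerHom, hZ, hFa, hFt, α, d, τ]
  generalize Abelianization.of X = A at *
  generalize Abelianization.of Y = B at *
  generalize Abelianization.of Z = C at *
  set c := C * B⁻¹ with hc
  have hcn : c ^ (2 * k + 1) = B ^ 2 := by
    rw [hc, mul_zpow, hrel', zpow_add, inv_zpow]
    simp
  have hg : (B * c ^ (-k)) ^ 2 = c := by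
    rw [mul_pow, ← hcn, ← zpow_natCast, ← zpow_mul, ← zpow_add]
    convert zpow_one c using 2
    push_cast
    ring
  have hg_mem : B * c ^ (-k) ∈ Subgroup.closure {B * c ^ (-k), A} :=
    Subgroup.subset_closure (by simp)
  have hc_mem : c ∈ Subgroup.closure {B * c ^ (-k), A} := by
    have := Subgroup.pow_mem _ hg_mem 2
    rwa [hg] at this
  have hB_mem : B ∈ Subgroup.closure {B * c ^ (-k), A} := by
    simpa using Subgroup.mul_mem _ hg_mem (Subgroup.zpow_mem _ hc_mem k)
  refine ⟨B * c ^ (-k), A, ?_, hfX, Subgroup.subset_closure (by simp), hB_mem, ?_⟩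
  · rw [map_mul, map_zpow, hc, map_mul, map_inv, hfY, hfZ]
    apply Multiplicative.toAdd.injective
    ext
    · simp
      ring
    · simp
  · simpa [hc] using Subgroup.mul_mem _ hc_mem hB_mem

theorem stmt_6 (n : ℤ) :
    ∃ Γ' : Subgroup (BS n (n + 2)), Γ'.index = 2 ∧
      ∀ x : Abelianization ↥Γ', x ^ 2 = 1 → ∃ y : Abelianization ↥Γ', x = y ^ 2 := by
  obtain ⟨k, rfl | rfl⟩ := Int.even_or_odd' n
  · exact exists_two_avoiding_of_even k
  · exact exists_two_avoiding_of_odd k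
end

section
/- Let p ≥ 1 and l ≥ 1 be integers, set k = 2l, and let Γ = G_{2p−1, 2p+1, k} = ⟨a, t ∣ t^k a^{2p−1} t^{−k} = a^{2p+1}⟩. Let θ : Γ → ℤ/2 be the group homomorphism determined by θ(a) = 1 and θ(t) = 0 (well defined since the relator has exponent sum −2 in a and 0 in t), and let Γ' = ker θ. Then Γ' has index 2 in Γ and the abelianization of Γ' is isomorphic to ℤ × ℤ/(4l). -/
/-- The relator `t^k a^m t^{-k} a^{-n}` of the Baumslag–Strebel group, in the free
group on two generators, where `a` is `FreeGroup.of 0` and `t` is `FreeGroup.of 1`. -/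
def BStRel (m n k : ℤ) : FreeGroup (Fin 2) :=
  FreeGroup.of 1 ^ k * FreeGroup.of 0 ^ m * FreeGroup.of 1 ^ (-k) * FreeGroup.of 0 ^ (-n)

/-- The Baumslag–Strebel group `G_{m,n,k} = ⟨a, t ∣ t^k a^m t^{-k} = a^n⟩`. -/
abbrev BSt (m n k : ℤ) : Type :=
  PresentedGroup ({BStRel m n k} : Set (FreeGroup (Fin 2)))

namespace RegularWreathProduct

variable {D Q : Type*} [Group D] [Group Q]

/-- The inclusion of the base group `Q → D` into the regular wreath product `D ≀ᵣ Q`. -/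
def baseHom : (Q → D) →* D ≀ᵣ Q where
  toFun f := ⟨f, 1⟩
  map_one' := rfl
  map_mul' f g := by ext <;> simp

@[simp]
theorem left_baseHom (f : Q → D) : (baseHom f : D ≀ᵣ Q).left = f := rfl

@[simp]
theorem right_baseHom (f : Q → D) : (baseHom f : D ≀ᵣ Q).right = 1 := rfl

theorem mul_baseHom (w : D ≀ᵣ Q) (hD : ∀ x y : D, x * y = y * x) (f : Q → D) :
    w * baseHom f = baseHom (fun x ↦ f (w.right⁻¹ * x)) * w := by
  ext x
  · simp [hD (w.left x)]
  · simp

/-- The map `g ↦ (F g).left 1` is a homomorphism on any subgroup whose image under `F`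
lies in the base group. -/
def leftOneHom {G : Type*} [Group G] (F : G →* D ≀ᵣ Q) (H : Subgroup G)
    (hH : ∀ g ∈ H, (F g).right = 1) : H →* D where
  toFun g := (F g).left 1
  map_one' := by simp
  map_mul' g h := by simp [hH g g.2]

end RegularWreathProduct

open RegularWreathProduct

theorem zpow_two_mul_sub_one_eq {G : Type*} [Group G] (a : G) (p : ℤ) :
    a ^ (2 * p - 1) = (a ^ (2 : ℤ)) ^ (p - 1) * a := by
  rw [← zpow_mul, ← zpow_add_one]; congr 1; ring

theorem zpow_two_mul_add_one_eq {G : Type*} [Group G] (a : G) (p : ℤ) :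
    a ^ (2 * p + 1) = (a ^ (2 : ℤ)) ^ p * a := by
  rw [← zpow_mul, ← zpow_add_one]

theorem Multiplicative.zmod_two_eq (x : Multiplicative (ZMod 2)) :
    x = 1 ∨ x = Multiplicative.ofAdd 1 := by
  revert x; decide

section Wreath

variable {D : Type*} [CommGroup D]

/-- The image of the generator `t` in the wreath product by `ℤ/2`. -/
def wreathStable (u v : D) : D ≀ᵣ Multiplicative (ZMod 2) :=
  baseHom fun x ↦ if x = 1 then u else v

/-- The image of the generator `a` in the wreath product by `ℤ/2`; its square is the constant
function `b` in the base group. -/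
def wreathSwap (b : D) : D ≀ᵣ Multiplicative (ZMod 2) :=
  ⟨fun x ↦ if x = 1 then b else 1, Multiplicative.ofAdd 1⟩

theorem wreathSwap_zpow_two (b : D) : wreathSwap b ^ (2 : ℤ) = baseHom fun _ ↦ b := by
  rw [zpow_two]
  ext x
  · rcases Multiplicative.zmod_two_eq x with rfl | rfl <;> simp [wreathSwap]
  · exact congrArg Multiplicative.toAdd
      (show (Multiplicative.ofAdd 1 * Multiplicative.ofAdd 1 : Multiplicative (ZMod 2)) = 1 by
        decide)

theorem wreath_relation (u v b : D) (p k : ℤ) (h : u ^ k = b * v ^ k) (hb : b * b = 1) :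
    wreathStable u v ^ k * wreathSwap b ^ (2 * p - 1) * wreathStable u v ^ (-k) *
      wreathSwap b ^ (-(2 * p + 1)) = 1 := by
  rw [zpow_neg, zpow_neg, mul_inv_eq_one, mul_inv_eq_iff_eq_mul, zpow_two_mul_sub_one_eq,
    zpow_two_mul_add_one_eq, wreathSwap_zpow_two, wreathStable, ← map_zpow, ← map_zpow,
    ← map_zpow, mul_assoc _ (wreathSwap b), mul_baseHom _ mul_comm, ← mul_assoc, ← mul_assoc,
    ← map_mul, ← map_mul]
  congr 2
  have hbp : b ^ p = b ^ (p - 1) * b := by rw [← zpow_add_one]; congr 1; ring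
  funext x
  rcases Multiplicative.zmod_two_eq x with rfl | rfl
  · simp [wreathSwap, h, hbp, mul_comm, mul_assoc, mul_left_comm]
  · simp only [wreathSwap, Pi.mul_apply, Pi.pow_apply, inv_mul_cancel, if_true, h, hbp]
    simp only [ofAdd_eq_one, one_ne_zero, if_false]
    rw [mul_assoc, ← mul_assoc b b, hb, one_mul, mul_comm]

end Wreath

section Kernel

variable {G : Type*} [Group G] {a t : G} {θ : G →* Multiplicative (ZMod 2)}

theorem closure_ker_eq_top (hG : Subgroup.closure {a, t} = ⊤)
    (ha : θ a = Multiplicative.ofAdd 1) (T₀ T₁ B : θ.ker) (hT₀ : (T₀ : G) = t)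
    (hT₁ : (T₁ : G) = a * t * a⁻¹) (hB : (B : G) = a ^ (2 : ℤ)) :
    Subgroup.closure {T₀, T₁, B} = ⊤ := by
  set K := Subgroup.closure {T₀, T₁, B}
  set H := K.map θ.ker.subtype
  have ht₀ : t ∈ H := ⟨T₀, Subgroup.subset_closure (by simp), hT₀⟩
  have ht₁ : a * t * a⁻¹ ∈ H := ⟨T₁, Subgroup.subset_closure (by simp), hT₁⟩
  have hb : a * a ∈ H := ⟨B, Subgroup.subset_closure (by simp), hB.trans (zpow_two a)⟩
  have key : ∀ g : G, g ∈ H ∨ a * g ∈ H := by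
    intro g
    have hg : g ∈ Subgroup.closure {a, t} := hG ▸ Subgroup.mem_top g
    induction hg using Subgroup.closure_induction_left with
    | one => exact Or.inl (one_mem H)
    | mul_left x hx y _ ih =>
      rcases hx with rfl | rfl
      · refine ih.symm.imp_right fun h ↦ ?_
        simpa [mul_assoc] using mul_mem hb h
      · refine ih.imp (mul_mem ht₀) fun h ↦ ?_
        simpa [mul_assoc] using mul_mem ht₁ h
    | inv_mul_cancel x hx y _ ih =>
      rcases hx with rfl | rfl
      · refine ih.symm.imp (fun h ↦ ?_) fun h ↦ by simpa using h
        simpa [mul_assoc] using mul_mem (inv_mem hb) h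
      · refine ih.imp (mul_mem (inv_mem ht₀)) fun h ↦ ?_
        simpa [mul_assoc] using mul_mem (inv_mem ht₁) h
  refine (Subgroup.eq_top_iff' K).2 fun g ↦ ?_
  rcases key g with h | ⟨y, -, hy⟩
  · obtain ⟨y, hyK, hy⟩ := h
    exact Subtype.ext hy ▸ hyK
  · have hy' : θ (a * g) = 1 := hy ▸ y.2
    rw [map_mul, ha, MonoidHom.mem_ker.1 g.2, mul_one] at hy'
    exact absurd hy' (by decide)

variable {D : Type*} [CommGroup D]

theorem map_ker_relations {p k : ℤ}
    (hr : t ^ k * a ^ (2 * p - 1) * t ^ (-k) * a ^ (-(2 * p + 1)) = 1)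
    (T₀ T₁ B : θ.ker) (hT₀ : (T₀ : G) = t)
    (hT₁ : (T₁ : G) = a * t * a⁻¹) (hB : (B : G) = a ^ (2 : ℤ)) (f : θ.ker →* D) :
    f B = (f T₀ / f T₁) ^ k ∧ (f T₀ / f T₁) ^ (2 * k) = 1 := by
  rw [zpow_neg, zpow_neg, mul_inv_eq_one, mul_inv_eq_iff_eq_mul, zpow_two_mul_sub_one_eq,
    zpow_two_mul_add_one_eq, ← hB] at hr
  have hcomm : a * (B : G) = B * a := by rw [hB, ← zpow_one_add, ← zpow_add_one]; rfl
  have hcommp (q : ℤ) : a * (B : G) ^ q = (B : G) ^ q * a :=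
    (Commute.zpow_right (show Commute a (B : G) from hcomm) q).eq
  have h₁ : T₀ ^ k * B ^ (p - 1) = B ^ p * T₁ ^ k := by
    apply Subtype.ext
    push_cast
    rw [hT₀, hT₁, conj_zpow, ← mul_left_inj a]
    simpa [mul_assoc] using hr
  have h₂ : T₁ ^ k * B ^ p = B ^ (p + 1) * T₀ ^ k := by
    apply Subtype.ext
    push_cast
    rw [hT₀, hT₁, conj_zpow]
    have hBa : (B : G) = a * a := by rw [hB, zpow_two]
    have hs : (B : G) ^ p = a * (B ^ (p - 1) * a) := by
      rw [← mul_assoc, hcommp, mul_assoc, ← hBa, ← zpow_add_one, sub_add_cancel]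
    calc a * t ^ k * a⁻¹ * (B : G) ^ p
        = a * (t ^ k * (B ^ (p - 1) * a)) := by
          rw [hs]; group
      _ = a * B ^ p * a * t ^ k := by rw [hr]; group
      _ = B ^ (p + 1) * t ^ k := by rw [hcommp, zpow_add_one, hBa]; group
  have e₁ := congrArg f h₁
  have e₂ := congrArg f h₂
  simp only [map_mul, map_zpow] at e₁ e₂
  have c₁ : f T₀ ^ k = f B * f T₁ ^ k := by
    rw [← mul_left_inj (f B ^ (p - 1)), e₁, mul_right_comm, ← zpow_one_add, add_sub_cancel]
  have c₂ : f T₁ ^ k = f B * f T₀ ^ k := by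
    rw [← mul_left_inj (f B ^ p), e₂, zpow_add_one]
    ac_rfl
  have hfB : f B = (f T₀ / f T₁) ^ k := by rw [div_zpow, c₁, mul_div_cancel_right]
  refine ⟨hfB, ?_⟩
  rw [two_mul, zpow_add, ← hfB]
  rwa [c₂, ← mul_assoc, right_eq_mul] at c₁

end Kernel

theorem stmt_10 (p l : ℤ) (hp : 1 ≤ p) (hl : 1 ≤ l)
    (θ : BSt (2 * p - 1) (2 * p + 1) (2 * l) →* Multiplicative (ZMod 2))
    (hθa : θ (PresentedGroup.of 0) = Multiplicative.ofAdd 1)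
    (hθt : θ (PresentedGroup.of 1) = Multiplicative.ofAdd 0) :
    (MonoidHom.ker θ).index = 2 ∧
      Nonempty (Abelianization ↥(MonoidHom.ker θ) ≃*
        Multiplicative (ℤ × ZMod (4 * l).natAbs)) := by
  set a : BSt (2 * p - 1) (2 * p + 1) (2 * l) := PresentedGroup.of 0 with ha
  set t : BSt (2 * p - 1) (2 * p + 1) (2 * l) := PresentedGroup.of 1 with ht
  rw [ofAdd_zero] at hθt
  have hG : Subgroup.closure {a, t} = ⊤ := by
    rw [← PresentedGroup.closure_range_of]
    congr 1
    ext x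
    simp [Fin.exists_fin_two, ha, ht, eq_comm]
  have hr : t ^ (2 * l) * a ^ (2 * p - 1) * t ^ (-(2 * l)) * a ^ (-(2 * p + 1)) = 1 :=
    PresentedGroup.one_of_mem (rels := {BStRel (2 * p - 1) (2 * p + 1) (2 * l)}) rfl
  constructor
  · have hsurj : Function.Surjective θ := fun x ↦ by
      rcases Multiplicative.zmod_two_eq x with rfl | rfl
      · exact ⟨1, map_one θ⟩
      · exact ⟨a, hθa⟩
    rw [Subgroup.index_ker, MonoidHom.range_eq_top.2 hsurj]
    simp
  let T₀ : θ.ker := ⟨t, hθt⟩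
  let T₁ : θ.ker := ⟨a * t * a⁻¹, by simp [MonoidHom.mem_ker, hθt]⟩
  let B : θ.ker := ⟨a ^ (2 : ℤ), by rw [MonoidHom.mem_ker, map_zpow, hθa]; rfl⟩
  have hgen := closure_ker_eq_top hG hθa T₀ T₁ B rfl rfl rfl
  let N := (4 * l).natAbs
  have hN : (N : ℤ) = 4 * l := Int.natAbs_of_nonneg (by lia)
  have hN' : (4 * l : ZMod N) = 0 := by
    have := congrArg (Int.cast : ℤ → ZMod N) hN
    simpa using this.symm
  -- the map from the kernel
  let s : Multiplicative (ℤ × ZMod N) := Multiplicative.ofAdd (0, 1)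
  let u : Multiplicative (ℤ × ZMod N) := Multiplicative.ofAdd (1, 0)
  have hs (n : ℤ) : s ^ n = Multiplicative.ofAdd (0, (n : ZMod N)) := by
    simp [s, ← ofAdd_zsmul]
  have hrel : ∀ r ∈ ({BStRel (2 * p - 1) (2 * p + 1) (2 * l)} : Set _),
      FreeGroup.lift ![wreathSwap (s ^ (2 * l)), wreathStable u (u / s)] r = 1 := by
    rintro _ rfl
    have := wreath_relation u (u / s) (s ^ (2 * l)) p (2 * l)
      (by rw [div_zpow, mul_div_cancel]) (by
        rw [← zpow_add, hs, ← ofAdd_zero]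
        congr 2
        push_cast
        linear_combination hN')
    simpa [BStRel] using this
  let F := PresentedGroup.toGroup hrel
  have hFa : F a = wreathSwap (s ^ (2 * l)) := PresentedGroup.toGroup.of hrel
  have hFt : F t = wreathStable u (u / s) := PresentedGroup.toGroup.of hrel
  have hFθ : rightHom.comp F = θ := PresentedGroup.ext fun x ↦ by
    fin_cases x
    · exact (congrArg right hFa).trans hθa.symm
    · exact (congrArg right hFt).trans hθt.symm
  let φ := leftOneHom F θ.ker fun g hg ↦ (DFunLike.congr_fun hFθ g).trans hg
  have hφT₀ : φ T₀ = u := by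
    change (F t).left 1 = u
    simp [hFt, wreathStable]
  have hφT₁ : φ T₁ = u / s := by
    change (F (a * t * a⁻¹)).left 1 = u / s
    simp [hFt, hFa, wreathStable, wreathSwap]
  have hφB : φ B = s ^ (2 * l) := by
    change (F (a ^ (2 : ℤ))).left 1 = s ^ (2 * l)
    rw [map_zpow, hFa, wreathSwap_zpow_two, left_baseHom]
  -- the inverse map
  let q : θ.ker →* Abelianization θ.ker := Abelianization.of
  obtain ⟨hqB, hqN⟩ := map_ker_relations hr T₀ T₁ B rfl rfl rfl q
  let z : ZMod N →+ Additive (Abelianization θ.ker) :=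
    ZMod.lift N ⟨zmultiplesHom _ (Additive.ofMul (q T₀ / q T₁)), by
      rw [zmultiplesHom_apply, hN, ← ofMul_zpow, show 4 * l = 2 * (2 * l) by ring, hqN]; rfl⟩
  let ψ : Multiplicative (ℤ × ZMod N) →* Abelianization θ.ker :=
    AddMonoidHom.toMultiplicativeLeft
      ((zmultiplesHom _ (Additive.ofMul (q T₀))).coprod z)
  have hz (n : ℤ) : z (n : ZMod N) = Additive.ofMul ((q T₀ / q T₁) ^ n) := by
    simp only [z, ZMod.lift_coe]; rfl
  have hψu : ψ u = q T₀ := by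
    change (((1 : ℤ) • Additive.ofMul (q T₀) + z 0).toMul) = q T₀
    simp
  have hψs : ψ s = q T₀ / q T₁ := by
    have hz1 : z 1 = Additive.ofMul (q T₀ / q T₁) := by simpa using hz 1
    change (((0 : ℤ) • Additive.ofMul (q T₀) + z 1).toMul) = q T₀ / q T₁
    rw [hz1]
    simp
  have hψφ : ψ.comp φ = q := MonoidHom.eq_of_eqOn_dense hgen <| by
    rintro x (rfl | rfl | rfl)
    · simp [hφT₀, hψu]
    · simp [hφT₁, hψu, hψs]
    · simp [hφB, hψs, hqB]
  have hus : Subgroup.closure {u, s} = ⊤ := by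
    refine (Subgroup.eq_top_iff' _).2 fun x ↦ ?_
    obtain ⟨n, hn⟩ := ZMod.intCast_surjective x.toAdd.2
    have hx : x = u ^ x.toAdd.1 * s ^ n := by
      rw [hs, hn, ← ofAdd_zsmul, ← ofAdd_add]
      simp
    rw [hx]
    exact mul_mem (zpow_mem (Subgroup.subset_closure (by simp)) _)
      (zpow_mem (Subgroup.subset_closure (by simp)) _)
  have hφψ : (Abelianization.lift φ).comp ψ = MonoidHom.id _ :=
    MonoidHom.eq_of_eqOn_dense hus <| by
      rintro x (rfl | rfl)
      · simp [hψu, q, hφT₀]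
      · simp [hψs, q, hφT₀, hφT₁]
  refine ⟨MonoidHom.toMulEquiv (Abelianization.lift φ) ψ ?_ hφψ⟩
  ext g
  simpa using DFunLike.congr_fun hψφ g
end
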